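/- For every k ≥ 1, the reconfiguration distance in G^k between the shortest (s,t)-paths p^k_b and p^k_e satisfies 9(2^k − 1) ≤ dist(p^k_b, p^k_e) ≤ 11(2^k − 1); in particular, the diameter of the shortest-path reconfiguration graph of G^k is exponential in the number of vertices of G^k, which is 13k + 2. -/

import Mathlib

/-- Vertices of the graph `G^k`: `s`, `t`, vertices `x^{ℓ+1}_{i+1}` (for `ℓ : Fin k`, `i : Fin 7`)
and `y^{ℓ+1}_{i+1}` (for `ℓ : Fin k`, `i : Fin 6`).  A value `ℓ : Fin k` encodes level `ℓ+1`,
and an index `i : Fin 7` (resp. `Fin 6`) encodes the subscript `i+1`. -/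
inductive GVert (k : ℕ) : Type where
  | s : GVert k
  | t : GVert k
  | x (ℓ : Fin k) (i : Fin 7) : GVert k
  | y (ℓ : Fin k) (i : Fin 6) : GVert k
deriving DecidableEq, Fintype

/-- The (oriented) edge relation generating the graph `G^k`. -/
def gkRel (k : ℕ) : GVert k → GVert k → Prop
  | GVert.s, GVert.x ℓ _ => (ℓ : ℕ) = k - 1
  | GVert.x ℓ i, GVert.y ℓ' i' => ℓ = ℓ' ∧ ((i : ℕ) = (i' : ℕ) ∨ (i : ℕ) = (i' : ℕ) + 1)
  | GVert.y ℓ i, GVert.x ℓ' j => (ℓ : ℕ) = (ℓ' : ℕ) + 1 ∧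
      (((i : ℕ) = 0 ∨ (i : ℕ) = 2 ∨ (i : ℕ) = 4) ∨
        ((i : ℕ) = 1 ∧ (j : ℕ) = 0) ∨ ((i : ℕ) = 3 ∧ (j : ℕ) = 6) ∨
        ((i : ℕ) = 5 ∧ (j : ℕ) = 0))
  | GVert.y ℓ _, GVert.t => (ℓ : ℕ) = 0
  | _, _ => False

/-- The graph `G^k`. -/
def Gk (k : ℕ) : SimpleGraph (GVert k) := SimpleGraph.fromRel (gkRel k)

/-- `p` is a shortest `(s,t)`-path in `H`, recorded as the sequence of its `L+1` vertices;
its length `L` is required to equal the distance between `s` and `t`. -/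
def IsShortestSTPath {V : Type*} (H : SimpleGraph V) (s t : V) (L : ℕ)
    (p : Fin (L + 1) → V) : Prop :=
  p 0 = s ∧ p (Fin.last L) = t ∧ (∀ i : Fin L, H.Adj (p i.castSucc) (p i.succ)) ∧
    L = H.dist s t

/-- Two vertex sequences differ in exactly one position. -/
def DiffOne {N : ℕ} {α : Type*} (p q : Fin N → α) : Prop :=
  ∃ i, p i ≠ q i ∧ ∀ j, j ≠ i → p j = q j

/-- `ρ 0, ρ 1, …, ρ ℓ` is a reconfiguration sequence of length `ℓ` from the shortest
`(s,t)`-path `p` to the shortest `(s,t)`-path `q`: all its members are shortest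
`(s,t)`-paths and consecutive members differ in exactly one position. -/
def SPReconfSeq {V : Type*} (H : SimpleGraph V) (s t : V) (L : ℕ)
    (ρ : ℕ → (Fin (L + 1) → V)) (ℓ : ℕ) (p q : Fin (L + 1) → V) : Prop :=
  ρ 0 = p ∧ ρ ℓ = q ∧ (∀ i ≤ ℓ, IsShortestSTPath H s t L (ρ i)) ∧
    ∀ i < ℓ, DiffOne (ρ i) (ρ (i + 1))

/-- The path `p^k_b = s, x^k_1, y^k_1, x^{k-1}_1, y^{k-1}_1, …, x^1_1, y^1_1, t`. -/
def pbG (k : ℕ) : Fin (2 * k + 1 + 1) → GVert k := fun d =>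
  if h0 : (d : ℕ) = 0 then GVert.s
  else if h1 : (d : ℕ) ≤ 2 * k then
    if (d : ℕ) % 2 = 1 then GVert.x ⟨k - 1 - ((d : ℕ) - 1) / 2, by omega⟩ ⟨0, by omega⟩
    else GVert.y ⟨k - 1 - ((d : ℕ) - 1) / 2, by omega⟩ ⟨0, by omega⟩
  else GVert.t

/-- The path `p^k_e = s, x^k_7, y^k_6, x^{k-1}_1, y^{k-1}_1, …, x^1_1, y^1_1, t`. -/
def peG (k : ℕ) (hk : 1 ≤ k) : Fin (2 * k + 1 + 1) → GVert k := fun d =>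
  if (d : ℕ) = 1 then GVert.x ⟨k - 1, by omega⟩ ⟨6, by omega⟩
  else if (d : ℕ) = 2 then GVert.y ⟨k - 1, by omega⟩ ⟨5, by omega⟩
  else pbG k d
/-! The edges between `x`- and `y`-vertices of a level form a path, and a shortest `(s,t)`-path of
`G^k` uses exactly one edge of each level. It is therefore a sequence of positions `0, …, 11`, one
for each level, and a reconfiguration step moves one of these positions by one. An edge ending in
`y_2` or `y_6` forces position `0` on the level below, and an edge ending in `y_4` forces position
`11`. Hence, to move the topmost position from `0` to `11`, the levels below have to travel from the
state of `p^{k-1}_b` to that of `p^{k-1}_e` and back. This takes `D k = 11 + 2 * D (k - 1)` steps,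
so `D k = 11 * (2 ^ k - 1)` exactly. -/


section Walk

variable {V : Type*} {H : SimpleGraph V} {n : ℕ} {p : Fin (n + 1) → V} {f : V → ℤ}

theorem exists_walk_length_eq_sub (hp : ∀ i : Fin n, H.Adj (p i.castSucc) (p i.succ))
    {i j : Fin (n + 1)} (hij : i ≤ j) : ∃ w : H.Walk (p i) (p j), w.length = (j - i : ℕ) := by
  induction j using Fin.induction with
  | zero =>
    obtain rfl : i = 0 := Fin.le_zero_iff.mp hij
    exact ⟨.nil, by simp⟩
  | succ j ih =>
    obtain rfl | hlt := hij.eq_or_lt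
    · exact ⟨.nil, by simp⟩
    have hle : i ≤ j.castSucc := Fin.le_castSucc_iff.mpr hlt
    obtain ⟨w, hw⟩ := ih hle
    refine ⟨w.concat (hp j), ?_⟩
    rw [SimpleGraph.Walk.length_concat, hw, Fin.val_succ, Fin.val_castSucc]
    rw [Fin.le_def, Fin.val_castSucc] at hle
    omega

theorem abs_sub_le_walk_length (hf : ∀ u v, H.Adj u v → |f u - f v| ≤ 1) {u v : V}
    (w : H.Walk u v) : |f u - f v| ≤ w.length := by
  induction w with
  | nil => simp
  | @cons u v w h _ ih =>
    rw [SimpleGraph.Walk.length_cons]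
    have := abs_sub_le (f u) (f v) (f w)
    have := hf u v h
    push_cast
    linarith

theorem abs_sub_le_sub_of_adj (hf : ∀ u v, H.Adj u v → |f u - f v| ≤ 1)
    (hp : ∀ i : Fin n, H.Adj (p i.castSucc) (p i.succ)) {i j : Fin (n + 1)} (hij : i ≤ j) :
    |f (p i) - f (p j)| ≤ (j : ℤ) - i := by
  obtain ⟨w, hw⟩ := exists_walk_length_eq_sub hp hij
  have := abs_sub_le_walk_length hf w
  rwa [hw, Nat.cast_sub hij] at this

theorem eq_index_of_adj (hf : ∀ u v, H.Adj u v → |f u - f v| ≤ 1)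
    (hp : ∀ i : Fin n, H.Adj (p i.castSucc) (p i.succ)) (h₀ : f (p 0) = 0)
    (hn : f (p (Fin.last n)) = n) (i : Fin (n + 1)) : f (p i) = i := by
  have hl := abs_sub_le_sub_of_adj hf hp (Fin.zero_le i)
  have hr := abs_sub_le_sub_of_adj hf hp (Fin.le_last i)
  rw [h₀, abs_le, Fin.val_zero] at hl
  rw [hn, abs_le, Fin.val_last] at hr
  omega

theorem isShortestSTPath_of_adj (hf : ∀ u v, H.Adj u v → |f u - f v| ≤ 1)
    (hp : ∀ i : Fin n, H.Adj (p i.castSucc) (p i.succ)) (h₀ : f (p 0) = 0)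
    (hn : f (p (Fin.last n)) = n) : IsShortestSTPath H (p 0) (p (Fin.last n)) n p := by
  refine ⟨rfl, rfl, hp, ?_⟩
  obtain ⟨w, hw⟩ := exists_walk_length_eq_sub hp (Fin.zero_le (Fin.last n))
  obtain ⟨w', hw'⟩ := w.reachable.exists_walk_length_eq_dist
  have hle : H.dist (p 0) (p (Fin.last n)) ≤ n := by simpa [hw] using SimpleGraph.dist_le w
  have hge := abs_sub_le_walk_length hf w'
  rw [h₀, hn, hw', abs_le] at hge
  omega

end Walk

section Reconfiguration

variable {V : Type*} {H : SimpleGraph V} {s t : V} {L : ℕ}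

theorem DiffOne.symm {N : ℕ} {α : Type*} {p q : Fin N → α} (h : DiffOne p q) : DiffOne q p :=
  h.imp fun _ hi => ⟨hi.1.symm, fun j hj => (hi.2 j hj).symm⟩

/-- The shortest-path reconfiguration graph: its vertices are the shortest `(s,t)`-paths of length
`L`, and two of them are adjacent if they differ in exactly one position. -/
def reconfGraph (H : SimpleGraph V) (s t : V) (L : ℕ) :
    SimpleGraph {p : Fin (L + 1) → V // IsShortestSTPath H s t L p} where
  Adj p q := DiffOne p.1 q.1
  symm := ⟨fun _ _ => DiffOne.symm⟩
  loopless := ⟨fun _ ⟨_, hi, _⟩ => hi rfl⟩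

theorem exists_spReconfSeq_iff {ℓ : ℕ} {p q : {p // IsShortestSTPath H s t L p}} :
    (∃ ρ, SPReconfSeq H s t L ρ ℓ p q) ↔ ∃ w : (reconfGraph H s t L).Walk p q, w.length = ℓ := by
  constructor
  · rintro ⟨ρ, h₀, hℓ, hρ, hadj⟩
    let σ : Fin (ℓ + 1) → {p // IsShortestSTPath H s t L p} := fun i => ⟨ρ i, hρ i i.is_le⟩
    have hσ : ∀ i : Fin ℓ, (reconfGraph H s t L).Adj (σ i.castSucc) (σ i.succ) :=
      fun i => hadj i i.is_lt
    obtain ⟨w, hw⟩ := exists_walk_length_eq_sub hσ (Fin.zero_le (Fin.last ℓ))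
    exact ⟨w.copy (Subtype.ext h₀) (Subtype.ext hℓ), by simpa using hw⟩
  · rintro ⟨w, rfl⟩
    exact ⟨fun i => w.getVert i, by simp, by simp, fun i _ => (w.getVert i).2,
      fun i hi => w.adj_getVert_succ hi⟩

end Reconfiguration

section States

variable {k : ℕ} {a b : Fin k → Fin 12} {u v : Fin 12}

/-- The edge at position `u` of a level of `G^k` may be followed, in a shortest `(s,t)`-path, by the
edge at position `v` of the level below. The edges `x_i y_j` of a level form a path, and `u` is the
position of the edge along it, so that the edge at position `u` ends in `y_{u / 2 + 1}`. -/
def Compatible (u v : Fin 12) : Prop :=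
  ((u : ℕ) / 2 = 1 ∨ (u : ℕ) / 2 = 5 → v = 0) ∧ ((u : ℕ) / 2 = 3 → v = 11)

/-- The sequences of level edges, from the topmost level down, that occur in the shortest
`(s,t)`-paths of `G^k`. -/
def IsState (a : Fin k → Fin 12) : Prop :=
  ∀ i j : Fin k, (j : ℕ) = i + 1 → Compatible (a i) (a j)

/-- Two sequences of level edges are adjacent if they agree on all levels but one, on which their
edges are consecutive. -/
def StateAdj (a b : Fin k → Fin 12) : Prop :=
  ∃ i, (SimpleGraph.pathGraph 12).Adj (a i) (b i) ∧ ∀ j, j ≠ i → a j = b j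

/-- The graph of states, which is isomorphic to the reconfiguration graph of `G^k`. -/
def stateGraph (k : ℕ) : SimpleGraph {a : Fin k → Fin 12 // IsState a} where
  Adj a b := StateAdj a.1 b.1
  symm := ⟨fun _ _ ⟨i, hi, h⟩ => ⟨i, hi.symm, fun j hj => (h j hj).symm⟩⟩
  loopless := ⟨fun _ ⟨_, hi, _⟩ => hi.ne rfl⟩

/-- The state of `p^k_e`: the last edge on the topmost level, the first one on all others. The state
of `p^k_b` is `0`. -/
def topState (k : ℕ) : Fin k → Fin 12 := fun i => if (i : ℕ) = 0 then 11 else 0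

theorem topState_succ : topState (k + 1) = Fin.cons 11 0 := by
  ext i
  cases i using Fin.cases <;> simp [topState]

theorem isState_cons_iff : IsState (Fin.cons u a : Fin (k + 1) → Fin 12) ↔
    (∀ i : Fin k, (i : ℕ) = 0 → Compatible u (a i)) ∧ IsState a := by
  simp [IsState, Fin.forall_fin_succ]

theorem isState_zero : IsState (0 : Fin k → Fin 12) := fun _ _ _ => by simp [Compatible]

theorem isState_topState : IsState (topState k) := by
  intro i j hij
  by_cases hi : (i : ℕ) = 0 <;> simp [Compatible, topState, hij, hi]

theorem stateAdj_cons_iff :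
    StateAdj (Fin.cons u a : Fin (k + 1) → Fin 12) (Fin.cons v b) ↔
      ((SimpleGraph.pathGraph 12).Adj u v ∧ a = b) ∨ (u = v ∧ StateAdj a b) := by
  simp [StateAdj, Fin.exists_fin_succ, Fin.forall_fin_succ, funext_iff, and_left_comm,
    Fin.succ_ne_zero, (Fin.succ_ne_zero _).symm]

section LowerBound

/-- A function that changes by at most one along every edge of the state graph and measures the
progress of a state from `0` to `topState k`. While the head passes `4` and `5`, the tail has to
travel from `0` to `topState`, because the tail starts with `0` below the heads `2` and `3` and with
`11` below the heads `6` and `7`; while the head passes `8` and `9`, the tail has to travel back. -/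
def potential : ∀ {k : ℕ}, (Fin k → Fin 12) → ℤ
  | 0, _ => 0
  | k + 1, a =>
    (a 0 : ℕ) +
      if (a 0 : ℕ) ≤ 3 then 0
      else if (a 0 : ℕ) ≤ 5 then potential (Fin.tail a)
      else if (a 0 : ℕ) ≤ 7 then 11 * (2 ^ k - 1)
      else if (a 0 : ℕ) ≤ 9 then 2 * (11 * (2 ^ k - 1)) - potential (Fin.tail a)
      else 2 * (11 * (2 ^ k - 1))

theorem potential_eq_zero (ha : ∀ i : Fin k, (i : ℕ) = 0 → a i = 0) : potential a = 0 := by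
  cases k with
  | zero => rfl
  | succ k => simp [potential, ha 0 rfl]

theorem potential_eq_top (ha : ∀ i : Fin k, (i : ℕ) = 0 → a i = 11) :
    potential a = 11 * (2 ^ k - 1) := by
  cases k with
  | zero => simp [potential]
  | succ k =>
    have h_head : ((a 0 : Fin 12) : ℕ) = 11 := congrArg Fin.val (ha 0 rfl)
    simp only [potential, h_head, Nat.reduceLeDiff, ↓reduceIte, Nat.cast_ofNat]
    ring

theorem potential_tail_of_isState_cons (h : IsState (Fin.cons u a : Fin (k + 1) → Fin 12)) :
    ((u : ℕ) / 2 = 1 ∨ (u : ℕ) / 2 = 5 → potential a = 0) ∧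
      ((u : ℕ) / 2 = 3 → potential a = 11 * (2 ^ k - 1)) :=
  have hc := (isState_cons_iff.mp h).1
  ⟨fun hu => potential_eq_zero fun i hi => (hc i hi).1 hu,
    fun hu => potential_eq_top fun i hi => (hc i hi).2 hu⟩

theorem abs_potential_cons_sub_le_of_head (hu : IsState (Fin.cons u a : Fin (k + 1) → Fin 12))
    (hv : IsState (Fin.cons v a : Fin (k + 1) → Fin 12))
    (huv : (SimpleGraph.pathGraph 12).Adj u v) :
    |potential (Fin.cons u a : Fin (k + 1) → Fin 12) -
      potential (Fin.cons v a : Fin (k + 1) → Fin 12)| ≤ 1 := by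
  have hpu := potential_tail_of_isState_cons hu
  have hpv := potential_tail_of_isState_cons hv
  rw [SimpleGraph.pathGraph_adj] at huv
  simp only [potential, Fin.cons_zero, Fin.tail_cons]
  generalize potential a = φ at *
  generalize (11 * (2 ^ k - 1) : ℤ) = M at *
  rw [abs_le]
  split_ifs <;> omega

theorem abs_potential_cons_sub_le_of_tail (u : Fin 12) (h : |potential a - potential b| ≤ 1) :
    |potential (Fin.cons u a : Fin (k + 1) → Fin 12) -
      potential (Fin.cons u b : Fin (k + 1) → Fin 12)| ≤ 1 := by
  simp only [potential, Fin.cons_zero, Fin.tail_cons]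
  rw [abs_le] at *
  split_ifs <;> omega

theorem abs_potential_sub_le (ha : IsState a) (hb : IsState b) (hab : StateAdj a b) :
    |potential a - potential b| ≤ 1 := by
  induction k with
  | zero => simp [potential]
  | succ k ih =>
    cases a using Fin.consCases with | _ u a
    cases b using Fin.consCases with | _ v b
    obtain ⟨huv, rfl⟩ | ⟨rfl, htail⟩ := stateAdj_cons_iff.mp hab
    · exact abs_potential_cons_sub_le_of_head ha hb huv
    · exact abs_potential_cons_sub_le_of_tail u
        (ih (isState_cons_iff.mp ha).2 (isState_cons_iff.mp hb).2 htail)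

theorem le_length_stateGraph_walk
    (w : (stateGraph k).Walk ⟨0, isState_zero⟩ ⟨topState k, isState_topState⟩) :
    11 * (2 ^ k - 1) ≤ w.length := by
  have h := abs_sub_le_walk_length (f := fun a : {a : Fin k → Fin 12 // IsState a} => potential a.1)
    (fun a b => abs_potential_sub_le a.2 b.2) w
  have h_zero : potential (0 : Fin k → Fin 12) = 0 := potential_eq_zero fun _ _ => rfl
  have h_top : potential (topState k) = 11 * (2 ^ k - 1) :=
    potential_eq_top fun _ hi => if_pos hi
  rw [h_zero, h_top, abs_le] at h
  zify [Nat.one_le_two_pow (n := k)]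
  linarith

end LowerBound

section UpperBound

theorem exists_walk_cons_head (huv : u ≤ v)
    (h : ∀ w, u ≤ w → w ≤ v → IsState (Fin.cons w a : Fin (k + 1) → Fin 12)) :
    ∃ w : (stateGraph (k + 1)).Walk ⟨Fin.cons u a, h u le_rfl huv⟩ ⟨Fin.cons v a, h v huv le_rfl⟩,
      w.length = (v - u : ℕ) := by
  let p : Fin (v - u + 1 : ℕ) → {a : Fin (k + 1) → Fin 12 // IsState a} := fun i =>
    ⟨Fin.cons ⟨u + i, by omega⟩ a, h _ (by simp [Fin.le_def]) (by simp only [Fin.le_def]; omega)⟩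
  have hp : ∀ i : Fin (v - u : ℕ), (stateGraph (k + 1)).Adj (p i.castSucc) (p i.succ) := fun i =>
    stateAdj_cons_iff.mpr <|
      .inl ⟨SimpleGraph.pathGraph_adj.mpr <| .inl <| by simp [add_assoc], rfl⟩
  obtain ⟨w, hw⟩ := exists_walk_length_eq_sub hp (Fin.zero_le (Fin.last _))
  have h_last : (⟨u + (v - u : ℕ), by omega⟩ : Fin 12) = v := Fin.ext (Nat.add_sub_of_le huv)
  exact ⟨w.copy (by simp [p]) (by simp [p, h_last]), by simpa using hw⟩

theorem isState_cons_of_even (hu : (u : ℕ) / 2 % 2 = 0) (ha : IsState a) :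
    IsState (Fin.cons u a : Fin (k + 1) → Fin 12) :=
  isState_cons_iff.mpr ⟨fun _ _ => ⟨by omega, by omega⟩, ha⟩

/-- The embedding of the states below a topmost edge that leaves them unconstrained. -/
def consHom (hu : (u : ℕ) / 2 % 2 = 0) : stateGraph k →g stateGraph (k + 1) where
  toFun a := ⟨Fin.cons u a.1, isState_cons_of_even hu a.2⟩
  map_rel' h := stateAdj_cons_iff.mpr <| .inr ⟨rfl, h⟩

theorem exists_walk_cons_tail {a b : {a : Fin k → Fin 12 // IsState a}}
    (hu : (u : ℕ) / 2 % 2 = 0) (w : (stateGraph k).Walk a b) :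
    ∃ w' : (stateGraph (k + 1)).Walk ⟨Fin.cons u a.1, isState_cons_of_even hu a.2⟩
      ⟨Fin.cons u b.1, isState_cons_of_even hu b.2⟩, w'.length = w.length :=
  ⟨w.map (consHom hu), w.length_map _⟩

theorem exists_stateGraph_walk (k : ℕ) :
    ∃ w : (stateGraph k).Walk ⟨0, isState_zero⟩ ⟨topState k, isState_topState⟩,
      w.length = 11 * (2 ^ k - 1) := by
  induction k with
  | zero => exact ⟨SimpleGraph.Walk.nil.copy rfl (Subsingleton.elim _ _), by simp⟩
  | succ k ih =>
    have isState_cons_zero (c : Fin 12) (hc : (c : ℕ) / 2 ≠ 3) :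
        IsState (Fin.cons c 0 : Fin (k + 1) → Fin 12) :=
      isState_cons_iff.mpr ⟨fun _ _ => ⟨fun _ => rfl, fun h => absurd h hc⟩, isState_zero⟩
    have isState_cons_top (c : Fin 12) (hc : (c : ℕ) / 2 ≠ 1 ∧ (c : ℕ) / 2 ≠ 5) :
        IsState (Fin.cons c (topState k) : Fin (k + 1) → Fin 12) :=
      isState_cons_iff.mpr
        ⟨fun _ hi => ⟨fun h => absurd h (by tauto), fun _ => if_pos hi⟩, isState_topState⟩
    obtain ⟨tail, h_tail⟩ := ih
    obtain ⟨head₀₄, h₀₄⟩ := exists_walk_cons_head (u := 0) (v := 4) (by decide)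
      fun c _ hc => isState_cons_zero c (by omega)
    obtain ⟨up, h_up⟩ := exists_walk_cons_tail (u := 4) rfl tail
    obtain ⟨head₄₈, h₄₈⟩ := exists_walk_cons_head (u := 4) (v := 8) (by decide)
      fun c hc hc' => isState_cons_top c (by omega)
    obtain ⟨down, h_down⟩ := exists_walk_cons_tail (u := 8) rfl tail.reverse
    obtain ⟨head₈₁₁, h₈₁₁⟩ := exists_walk_cons_head (u := 8) (v := 11) (by decide)
      fun c hc _ => isState_cons_zero c (by omega)
    let w := head₀₄.append (up.append (head₄₈.append (down.append head₈₁₁)))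
    have hw : w.length = 4 + (11 * (2 ^ k - 1) + (4 + (11 * (2 ^ k - 1) + 3))) := by
      simp [w, h₀₄, h_up, h₄₈, h_down, h₈₁₁, h_tail]
    have h_zero : (Fin.cons 0 0 : Fin (k + 1) → Fin 12) = 0 := Fin.cons_self_tail 0
    refine ⟨w.copy (Subtype.ext h_zero) (Subtype.ext topState_succ.symm), ?_⟩
    rw [SimpleGraph.Walk.length_copy, hw]
    have := Nat.one_le_two_pow (n := k)
    omega

end UpperBound

end States

section Paths

variable {k : ℕ}

namespace GVert

/-- The index of the `x`-end of the edge at position `u` of a level. -/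
def xIndex (u : Fin 12) : Fin 7 := ⟨(u + 1) / 2, by omega⟩

/-- The index of the `y`-end of the edge at position `u` of a level. -/
def yIndex (u : Fin 12) : Fin 6 := ⟨u / 2, by omega⟩

/-- The distance from `s` to a vertex of `G^k`. -/
def layer : GVert k → ℤ
  | s => 0
  | t => 2 * k + 1
  | x ℓ _ => 2 * (k - ℓ) - 1
  | y ℓ _ => 2 * (k - ℓ)

end GVert

open GVert

theorem pathGraph_adj_iff_index {u v : Fin 12} : (SimpleGraph.pathGraph 12).Adj u v ↔
    (xIndex u ≠ xIndex v ∧ yIndex u = yIndex v) ∨ (xIndex u = xIndex v ∧ yIndex u ≠ yIndex v) := by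
  simp only [SimpleGraph.pathGraph_adj, xIndex, yIndex, ne_eq, Fin.mk.injEq]
  omega

theorem eq_of_index_eq {u v : Fin 12} (hx : xIndex u = xIndex v) (hy : yIndex u = yIndex v) :
    u = v := by
  simp only [xIndex, yIndex, Fin.mk.injEq] at hx hy
  omega

theorem exists_index_eq {r : Fin 7} {c : Fin 6} (h : (r : ℕ) = c ∨ (r : ℕ) = c + 1) :
    ∃ u, xIndex u = r ∧ yIndex u = c :=
  ⟨⟨r + c, by omega⟩, Fin.ext (by simp only [xIndex]; omega),
    Fin.ext (by simp only [yIndex]; omega)⟩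

theorem gkRel_y_x_iff {i j : Fin k} {u v : Fin 12} :
    gkRel k (y i (yIndex u)) (x j (xIndex v)) ↔ (i : ℕ) = j + 1 ∧ Compatible u v := by
  simp only [gkRel, Compatible, xIndex, yIndex, Fin.ext_iff, Fin.coe_ofNat_eq_mod]
  omega

theorem layer_eq_of_gkRel {u v : GVert k} (h : gkRel k u v) : layer v = layer u + 1 := by
  cases u <;> cases v <;> simp only [gkRel] at h <;> simp only [layer] <;> omega

theorem gk_adj_iff {u v : GVert k} : (Gk k).Adj u v ↔ gkRel k u v ∨ gkRel k v u := by
  refine (SimpleGraph.fromRel_adj _ _ _).trans (and_iff_right_of_imp ?_)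
  rintro h rfl
  have := layer_eq_of_gkRel (h.elim id id)
  omega

theorem gkRel_of_adj {u v : GVert k} (h : (Gk k).Adj u v) (hl : layer v = layer u + 1) :
    gkRel k u v := by
  refine (gk_adj_iff.mp h).resolve_right fun h => ?_
  have := layer_eq_of_gkRel h
  omega

theorem abs_layer_sub_le (u v : GVert k) (h : (Gk k).Adj u v) : |layer u - layer v| ≤ 1 := by
  rw [abs_le]
  rcases gk_adj_iff.mp h with h | h <;> have := layer_eq_of_gkRel h <;> omega

theorem exists_eq_x_of_layer_eq {v : GVert k} {i : Fin k} (h : layer v = (2 * i + 1 : ℕ)) :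
    ∃ r, v = x i.rev r := by
  cases v with simp only [layer] at h
  | x ℓ r =>
    obtain rfl : ℓ = i.rev := Fin.ext (by rw [Fin.val_rev]; omega)
    exact ⟨r, rfl⟩
  | _ => omega

theorem exists_eq_y_of_layer_eq {v : GVert k} {i : Fin k} (h : layer v = (2 * i + 2 : ℕ)) :
    ∃ c, v = y i.rev c := by
  cases v with simp only [layer] at h
  | y ℓ c =>
    obtain rfl : ℓ = i.rev := Fin.ext (by rw [Fin.val_rev]; omega)
    exact ⟨c, rfl⟩
  | _ => omega

/-- The position of the `x`-vertex of the `i`-th level, counted from the top, in an `(s,t)`-path. -/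
def xPos (i : Fin k) : Fin (2 * k + 1 + 1) := ⟨2 * i + 1, by omega⟩

/-- The position of the `y`-vertex of the `i`-th level, counted from the top, in an `(s,t)`-path. -/
def yPos (i : Fin k) : Fin (2 * k + 1 + 1) := ⟨2 * i + 2, by omega⟩

@[simp]
theorem xPos_inj {i j : Fin k} : xPos i = xPos j ↔ i = j := by
  simp [xPos, Fin.ext_iff]

@[simp]
theorem yPos_inj {i j : Fin k} : yPos i = yPos j ↔ i = j := by
  simp [yPos, Fin.ext_iff]

theorem xPos_ne_yPos (i j : Fin k) : xPos i ≠ yPos j := by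
  simp only [xPos, yPos, ne_eq, Fin.mk.injEq]
  omega

theorem eq_zero_or_odd_or_even_pos (d : ℕ) : d = 0 ∨ ∃ i, d = 2 * i + 1 ∨ d = 2 * i + 2 :=
  d.eq_zero_or_pos.imp_right fun _ => ⟨(d - 1) / 2, by omega⟩

theorem eq_zero_or_eq_last_or_exists_eq_pos (d : Fin (2 * k + 1 + 1)) :
    d = 0 ∨ d = Fin.last _ ∨ ∃ i, d = xPos i ∨ d = yPos i := by
  obtain ⟨d, hd⟩ := d
  obtain rfl | ⟨i, rfl | rfl⟩ := eq_zero_or_odd_or_even_pos d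
  · exact .inl rfl
  · obtain hi | rfl : i < k ∨ i = k := by omega
    · exact .inr (.inr ⟨⟨i, hi⟩, .inl rfl⟩)
    · exact .inr (.inl rfl)
  · exact .inr (.inr ⟨⟨i, by omega⟩, .inr rfl⟩)

theorem forall_position_iff {P : Fin (2 * k + 1 + 1) → Prop} :
    (∀ d, P d) ↔ P 0 ∧ (∀ i, P (xPos i)) ∧ (∀ i, P (yPos i)) ∧ P (Fin.last _) := by
  refine ⟨fun h => ⟨h _, fun _ => h _, fun _ => h _, h _⟩, ?_⟩
  rintro ⟨h_zero, hx, hy, h_last⟩ d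
  obtain rfl | rfl | ⟨i, rfl | rfl⟩ := eq_zero_or_eq_last_or_exists_eq_pos d
  exacts [h_zero, h_last, hx i, hy i]

theorem forall_consecutive_iff (hk : 0 < k) {R : Fin (2 * k + 1 + 1) → Fin (2 * k + 1 + 1) → Prop} :
    (∀ d : Fin (2 * k + 1), R d.castSucc d.succ) ↔
      R 0 (xPos ⟨0, hk⟩) ∧ (∀ i, R (xPos i) (yPos i)) ∧
        (∀ i j : Fin k, (j : ℕ) = i + 1 → R (yPos i) (xPos j)) ∧
          R (yPos ⟨k - 1, by omega⟩) (Fin.last _) := by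
  constructor
  · intro h
    have h_of_val_eq {d e : Fin (2 * k + 1 + 1)} (hde : (e : ℕ) = d + 1) : R d e := by
      have hd : (d : ℕ) < 2 * k + 1 := by omega
      obtain rfl : e = Fin.succ ⟨d, hd⟩ := Fin.ext hde
      exact h ⟨d, hd⟩
    refine ⟨h_of_val_eq rfl, fun i => h_of_val_eq rfl, fun i j hij => h_of_val_eq ?_,
      h_of_val_eq ?_⟩
    · simp only [xPos, yPos]
      omega
    · simp only [yPos, Fin.val_last]
      omega
  · rintro ⟨h_zero, hxy, hyx, h_last⟩ ⟨d, hd⟩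
    obtain rfl | ⟨i, rfl | rfl⟩ := eq_zero_or_odd_or_even_pos d
    · exact h_zero
    · exact hxy ⟨i, by omega⟩
    · obtain hi | rfl : i + 1 < k ∨ k = i + 1 := by omega
      · exact hyx ⟨i, by omega⟩ ⟨i + 1, hi⟩ rfl
      · exact h_last

/-- The `(s,t)`-path in `G^k` using the edge at position `a i` of the `i`-th level from the top. -/
def levelPath (a : Fin k → Fin 12) : Fin (2 * k + 1 + 1) → GVert k := fun d =>
  if (d : ℕ) = 0 then s
  else if h : ((d : ℕ) - 1) / 2 < k then
    if (d : ℕ) % 2 = 1 then x (Fin.rev ⟨_, h⟩) (xIndex (a ⟨_, h⟩))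
    else y (Fin.rev ⟨_, h⟩) (yIndex (a ⟨_, h⟩))
  else t

variable {a b : Fin k → Fin 12}

@[simp]
theorem levelPath_zero : levelPath a 0 = s := rfl

@[simp]
theorem levelPath_xPos (i : Fin k) : levelPath a (xPos i) = x i.rev (xIndex (a i)) := by
  simp [levelPath, xPos]

@[simp]
theorem levelPath_yPos (i : Fin k) : levelPath a (yPos i) = y i.rev (yIndex (a i)) := by
  simp [levelPath, yPos, show (2 * (i : ℕ) + 1) / 2 = i by omega]

@[simp]
theorem levelPath_last : levelPath a (Fin.last _) = t := by
  simp [levelPath]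

theorem eq_levelPath_iff {p : Fin (2 * k + 1 + 1) → GVert k} :
    p = levelPath a ↔ p 0 = s ∧ (∀ i, p (xPos i) = x i.rev (xIndex (a i))) ∧
      (∀ i, p (yPos i) = y i.rev (yIndex (a i))) ∧ p (Fin.last _) = t := by
  simp only [funext_iff, forall_position_iff, levelPath_zero, levelPath_xPos, levelPath_yPos,
    levelPath_last]

theorem pbG_eq_levelPath_zero : pbG k = levelPath 0 := by
  refine eq_levelPath_iff.mpr ⟨rfl, fun i => ?_, fun i => ?_, by simp [pbG]⟩
  · have hi : 2 * (i : ℕ) + 1 ≤ 2 * k := by omega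
    have h_rev : k - 1 - (i : ℕ) = k - (i + 1) := by omega
    simp [pbG, xPos, xIndex, Fin.rev, hi, h_rev]
  · have hi : 2 * (i : ℕ) + 2 ≤ 2 * k := by omega
    have h_rev : k - 1 - (2 * (i : ℕ) + 1) / 2 = k - (i + 1) := by omega
    simp [pbG, yPos, yIndex, Fin.rev, hi, h_rev]

theorem peG_eq_levelPath_topState (hk : 1 ≤ k) : peG k hk = levelPath (topState k) := by
  obtain ⟨h_zero, hx, hy, h_last⟩ := eq_levelPath_iff.mp (pbG_eq_levelPath_zero (k := k))
  refine eq_levelPath_iff.mpr ⟨h_zero, fun i => ?_, fun i => ?_, ?_⟩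
  · by_cases hi : (i : ℕ) = 0
    · simp [peG, topState, xPos, xIndex, Fin.ext_iff, hi]
    · have h : peG k hk (xPos i) = pbG k (xPos i) := by simp [peG, xPos, hi]
      rw [h, hx, topState, if_neg hi, Pi.zero_apply]
  · by_cases hi : (i : ℕ) = 0
    · simp [peG, topState, yPos, yIndex, Fin.ext_iff, hi]
    · have h : peG k hk (yPos i) = pbG k (yPos i) := by simp [peG, yPos, hi]
      rw [h, hy, topState, if_neg hi, Pi.zero_apply]
  · rw [peG, if_neg (by simp only [Fin.val_last]; omega),
      if_neg (by simp only [Fin.val_last]; omega), h_last]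

theorem isShortestSTPath_levelPath (hk : 0 < k) (ha : IsState a) :
    IsShortestSTPath (Gk k) s t (2 * k + 1) (levelPath a) := by
  have h_rel : ∀ d : Fin (2 * k + 1), gkRel k (levelPath a d.castSucc) (levelPath a d.succ) := by
    refine (forall_consecutive_iff hk
      (R := fun d e => gkRel k (levelPath a d) (levelPath a e))).mpr ?_
    simp only [levelPath_zero, levelPath_xPos, levelPath_yPos, levelPath_last, gkRel_y_x_iff]
    refine ⟨by simp [gkRel], fun i => ⟨rfl, ?_⟩, fun i j hij => ⟨?_, ha i j hij⟩, ?_⟩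
    · simp only [xIndex, yIndex]
      omega
    · simp only [Fin.val_rev]
      omega
    · simp only [gkRel, Fin.val_rev]
      omega
  have h := isShortestSTPath_of_adj abs_layer_sub_le (fun d => gk_adj_iff.mpr (.inl (h_rel d)))
    (by simp [layer]) (by simp [layer])
  rwa [levelPath_zero, levelPath_last] at h

theorem IsShortestSTPath.exists_eq_levelPath (hk : 0 < k) {p : Fin (2 * k + 1 + 1) → GVert k}
    (hp : IsShortestSTPath (Gk k) s t (2 * k + 1) p) : ∃ a, IsState a ∧ p = levelPath a := by
  obtain ⟨h_zero, h_last, h_adj, -⟩ := hp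
  have h_layer : ∀ d, layer (p d) = (d : ℕ) := eq_index_of_adj abs_layer_sub_le h_adj
    (by simp [h_zero, layer]) (by simp [h_last, layer])
  have h_rel : ∀ d : Fin (2 * k + 1), gkRel k (p d.castSucc) (p d.succ) := fun d =>
    gkRel_of_adj (h_adj d) (by simp [h_layer])
  obtain ⟨-, hxy, hyx, -⟩ := (forall_consecutive_iff hk (R := fun d e => gkRel k (p d) (p e))).mp
    h_rel
  have h_edge (i : Fin k) :
      ∃ u, p (xPos i) = x i.rev (xIndex u) ∧ p (yPos i) = y i.rev (yIndex u) := by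
    obtain ⟨r, hr⟩ := exists_eq_x_of_layer_eq (h_layer (xPos i))
    obtain ⟨c, hc⟩ := exists_eq_y_of_layer_eq (h_layer (yPos i))
    have hrc := hxy i
    rw [hr, hc] at hrc
    obtain ⟨u, rfl, rfl⟩ := exists_index_eq hrc.2
    exact ⟨u, hr, hc⟩
  choose a hx hy using h_edge
  refine ⟨a, fun i j hij => ?_, eq_levelPath_iff.mpr ⟨h_zero, hx, hy, h_last⟩⟩
  have h := hyx i j hij
  rw [hy, hx, gkRel_y_x_iff] at h
  exact h.2

theorem levelPath_injective : Function.Injective (levelPath (k := k)) := by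
  intro a b h
  obtain ⟨-, hx, hy, -⟩ := eq_levelPath_iff.mp h
  simp only [levelPath_xPos, levelPath_yPos, x.injEq, y.injEq, true_and] at hx hy
  exact funext fun i => eq_of_index_eq (hx i) (hy i)

theorem diffOne_levelPath_iff : DiffOne (levelPath a) (levelPath b) ↔ StateAdj a b := by
  constructor
  · rintro ⟨d, hne, heq⟩
    have hx (j : Fin k) (hj : xPos j ≠ d) : xIndex (a j) = xIndex (b j) := by
      simpa using heq (xPos j) hj
    have hy (j : Fin k) (hj : yPos j ≠ d) : yIndex (a j) = yIndex (b j) := by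
      simpa using heq (yPos j) hj
    obtain rfl | rfl | ⟨i, rfl | rfl⟩ := eq_zero_or_eq_last_or_exists_eq_pos d
    · exact absurd rfl hne
    · simp at hne
    · exact ⟨i, pathGraph_adj_iff_index.mpr
          (.inl ⟨by simpa using hne, hy i (xPos_ne_yPos i i).symm⟩),
        fun j hj => eq_of_index_eq (hx j (by simpa)) (hy j (xPos_ne_yPos i j).symm)⟩
    · exact ⟨i, pathGraph_adj_iff_index.mpr (.inr ⟨hx i (xPos_ne_yPos i i), by simpa using hne⟩),
        fun j hj => eq_of_index_eq (hx j (xPos_ne_yPos j i)) (hy j (by simpa))⟩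
  · rintro ⟨i, hi, heq⟩
    obtain ⟨hx, hy⟩ | ⟨hx, hy⟩ := pathGraph_adj_iff_index.mp hi
    · refine ⟨xPos i, by simpa using hx, forall_position_iff.mpr ⟨by simp, fun j hj => ?_,
        fun j _ => ?_, by simp⟩⟩
      · simp [heq j (by simpa using hj)]
      · obtain rfl | hj := eq_or_ne j i
        · simp [hy]
        · simp [heq j hj]
    · refine ⟨yPos i, by simpa using hy, forall_position_iff.mpr ⟨by simp, fun j _ => ?_,
        fun j hj => ?_, by simp⟩⟩
      · obtain rfl | hj := eq_or_ne j i
        · simp [hx]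
        · simp [heq j hj]
      · simp [heq j (by simpa using hj)]

/-- A state corresponds to the path consisting of its level edges. -/
noncomputable def stateIso (hk : 0 < k) :
    stateGraph k ≃g reconfGraph (Gk k) s t (2 * k + 1) where
  toEquiv := Equiv.ofBijective
    (fun a => ⟨levelPath a.1, isShortestSTPath_levelPath hk a.2⟩)
    ⟨fun _ _ h => Subtype.ext (levelPath_injective (congrArg Subtype.val h)), fun p =>
      let ⟨a, ha, hp⟩ := p.2.exists_eq_levelPath hk
      ⟨⟨a, ha⟩, Subtype.ext hp.symm⟩⟩
  map_rel_iff' := diffOne_levelPath_iff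

theorem exists_spReconfSeq_levelPath_iff (hk : 0 < k) (ha : IsState a) (hb : IsState b) {ℓ : ℕ} :
    (∃ ρ, SPReconfSeq (Gk k) s t (2 * k + 1) ρ ℓ (levelPath a) (levelPath b)) ↔
      ∃ w : (stateGraph k).Walk ⟨a, ha⟩ ⟨b, hb⟩, w.length = ℓ := by
  refine (exists_spReconfSeq_iff (p := stateIso hk ⟨a, ha⟩) (q := stateIso hk ⟨b, hb⟩)).trans
    ⟨?_, ?_⟩
  · rintro ⟨w, rfl⟩
    exact ⟨(w.map (stateIso hk).symm.toHom).copy (by simp) (by simp), by simp⟩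
  · rintro ⟨w, rfl⟩
    exact ⟨w.map (stateIso hk).toHom, by simp⟩

end Paths

/-- The vertices of `G^k`, sorted by kind: `s` and `t`, the `x`-vertices, the `y`-vertices. -/
def GVert.equivSum (k : ℕ) : GVert k ≃ (Unit ⊕ Unit) ⊕ (Fin k × Fin 7) ⊕ (Fin k × Fin 6) where
  toFun
    | s => .inl (.inl ())
    | t => .inl (.inr ())
    | x ℓ i => .inr (.inl (ℓ, i))
    | y ℓ i => .inr (.inr (ℓ, i))
  invFun
    | .inl (.inl _) => s
    | .inl (.inr _) => t
    | .inr (.inl (ℓ, i)) => x ℓ i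
    | .inr (.inr (ℓ, i)) => y ℓ i
  left_inv v := by cases v <;> rfl
  right_inv v := by rcases v with (_ | _) | (_ | _) <;> rfl

theorem GVert.card (k : ℕ) : Fintype.card (GVert k) = 13 * k + 2 := by
  rw [Fintype.card_congr (GVert.equivSum k)]
  simp only [Fintype.card_sum, Fintype.card_prod, Fintype.card_unit, Fintype.card_fin]
  ring

theorem stmt2_general (k : ℕ) (hk : 1 ≤ k) :
    IsLeast {ℓ | ∃ ρ, SPReconfSeq (Gk k) GVert.s GVert.t (2 * k + 1) ρ ℓ (pbG k) (peG k hk)}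
      (11 * (2 ^ k - 1)) := by
  simp only [pbG_eq_levelPath_zero, peG_eq_levelPath_topState hk,
    exists_spReconfSeq_levelPath_iff hk isState_zero isState_topState]
  refine ⟨exists_stateGraph_walk k, ?_⟩
  rintro _ ⟨w, rfl⟩
  exact le_length_stateGraph_walk w

/-- the reconfiguration distance in `G^k` between `p^k_b` and `p^k_e` is
between `9(2^k - 1)` and `11(2^k - 1)`; in particular the diameter of the shortest-path
reconfiguration graph of `G^k` is exponential in the number of vertices of `G^k`,
which is `13k + 2`. -/
theorem stmt2 (k : ℕ) (hk : 1 ≤ k) :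
    (∀ (ℓ : ℕ) (ρ : ℕ → (Fin (2 * k + 1 + 1) → GVert k)),
        SPReconfSeq (Gk k) GVert.s GVert.t (2 * k + 1) ρ ℓ (pbG k) (peG k hk) →
          9 * (2 ^ k - 1) ≤ ℓ) ∧
    (∃ ℓ ≤ 11 * (2 ^ k - 1), ∃ ρ : ℕ → (Fin (2 * k + 1 + 1) → GVert k),
        SPReconfSeq (Gk k) GVert.s GVert.t (2 * k + 1) ρ ℓ (pbG k) (peG k hk)) ∧
    Fintype.card (GVert k) = 13 * k + 2 := by
  have h := stmt2_general k hk
  exact ⟨fun ℓ ρ hρ => (Nat.mul_le_mul_right _ (by norm_num)).trans (h.2 ⟨ρ, hρ⟩),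
    ⟨_, le_rfl, h.1⟩, GVert.card k⟩
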